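/- Let β > 0, let N be a positive integer, let 0 ≤ l ≤ N, and let a > −1 and b be real with b > a + (N−1)β + l + 1. Then the Cauchy-type β-ensemble average of the l-th elementary symmetric polynomial is ⟨e_l⟩ = C(N,l) · ∏_{j=1}^{l} (a + 1 + (N−j)β/2)/(b − a − 2 − (2N−j−1)β/2), where C(N,l) is the binomial coefficient. Explicitly: ∫_{(0,∞)^N} e_l(x) ∏_{i=1}^N x_i^a (1+x_i)^{−b} ∏_{1≤j<k≤N} |x_k−x_j|^β dx divided by ∫_{(0,∞)^N} ∏_{i=1}^N x_i^a (1+x_i)^{−b} ∏_{1≤j<k≤N} |x_k−x_j|^β dx equals C(N,l) ∏_{j=1}^{l} (a+1+(N−j)β/2)/(b−a−2−(2N−j−1)β/2). -/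

import Mathlib

open MeasureTheory

/-- The `l`-th elementary symmetric polynomial in `N` variables. -/
noncomputable def esym (N l : ℕ) (x : Fin N → ℝ) : ℝ :=
  ∑ S ∈ Finset.powersetCard l (Finset.univ : Finset (Fin N)), ∏ i ∈ S, x i

/-- The `β`-fold interaction term `∏_{j < k} |x_k - x_j|^β`. -/
noncomputable def interaction (N : ℕ) (β : ℝ) (x : Fin N → ℝ) : ℝ :=
  ∏ p ∈ Finset.univ.filter (fun p : Fin N × Fin N => p.1 < p.2), |x p.2 - x p.1| ^ β

/-- The Cauchy ensemble density in the exponential coordinates `x i = exp (u i)`, including the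
Jacobian `∏ x i`, with the interaction `|x i - x j| ^ β` regularised to
`((x i - x j) ^ 2 + ε) ^ (β / 2)`. -/
noncomputable def logDensity {ι : Type*} [Fintype ι] [DecidableEq ι] (a b β ε : ℝ)
    (u : ι → ℝ) : ℝ :=
  (∏ i, Real.exp ((a + 1) * u i) * (1 + Real.exp (u i)) ^ (-b)) *
    ∏ i, ∏ j ∈ Finset.univ.erase i, ((Real.exp (u i) - Real.exp (u j)) ^ 2 + ε) ^ (β / 4)

theorem prod_prod_erase_comm {ι : Type*} [Fintype ι] [DecidableEq ι] (f : ι → ι → ℝ) :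
    ∏ i, ∏ j ∈ Finset.univ.erase i, f i j = ∏ j, ∏ i ∈ Finset.univ.erase j, f i j :=
  Finset.prod_comm' fun x y => by simp [ne_comm]

theorem prod_prod_erase_eq_sq {n : ℕ} {f : Fin n → Fin n → ℝ} (hf : ∀ i j, f i j = f j i) :
    ∏ i, ∏ j ∈ Finset.univ.erase i, f i j =
      (∏ p ∈ Finset.univ.filter (fun p : Fin n × Fin n => p.1 < p.2), f p.1 p.2) ^ 2 := by
  have h1 : ∏ p ∈ Finset.univ.filter (fun p : Fin n × Fin n => p.1 < p.2), f p.1 p.2 =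
      ∏ i, ∏ j ∈ Finset.univ.erase i, if i < j then f i j else 1 := by
    rw [Finset.prod_filter, ← Finset.univ_product_univ, Finset.prod_product]
    refine Finset.prod_congr rfl fun i _ => ?_
    exact (Finset.prod_erase _ (by simp)).symm
  have h2 := h1.trans (prod_prod_erase_comm _)
  rw [sq]
  nth_rewrite 2 [h2]
  rw [h1, ← Finset.prod_mul_distrib]
  refine Finset.prod_congr rfl fun i _ => ?_
  rw [← Finset.prod_mul_distrib]
  refine Finset.prod_congr rfl fun j hj => ?_
  rcases lt_or_gt_of_ne (Finset.ne_of_mem_erase hj) with h | h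
  · simp [h, h.not_gt, hf i j]
  · simp [h, h.not_gt]

theorem interaction_eq_prod_erase (n : ℕ) (β : ℝ) (x : Fin n → ℝ) :
    interaction n β x = ∏ i, ∏ j ∈ Finset.univ.erase i, ((x i - x j) ^ 2) ^ (β / 4) := by
  rw [prod_prod_erase_eq_sq (fun i j => by rw [← neg_sub, neg_sq]), interaction,
    ← Finset.prod_pow]
  refine Finset.prod_congr rfl fun p _ => ?_
  rw [abs_sub_comm, ← sq_abs (x p.1 - x p.2), ← Real.rpow_natCast |x p.1 - x p.2| 2,
    ← Real.rpow_mul (abs_nonneg _), ← Real.rpow_natCast, ← Real.rpow_mul (abs_nonneg _)]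
  congr 1
  push_cast
  ring

theorem setIntegral_pi_Ioi_eq_integral_exp {ι : Type*} [Fintype ι] [DecidableEq ι]
    (f : (ι → ℝ) → ℝ) :
    ∫ x in Set.univ.pi (fun _ : ι => Set.Ioi (0 : ℝ)), f x =
      ∫ u : ι → ℝ, (∏ i, Real.exp (u i)) * f (fun i => Real.exp (u i)) := by
  let F : (ι → ℝ) → ι → ℝ := fun u i => Real.exp (u i)
  let F' : (ι → ℝ) → (ι → ℝ) →L[ℝ] (ι → ℝ) := fun u =>
    ContinuousLinearMap.pi fun i => Real.exp (u i) • ContinuousLinearMap.proj i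
  have hF : ∀ u ∈ Set.univ, HasFDerivWithinAt F (F' u) Set.univ u := by
    intro u _
    refine HasFDerivAt.hasFDerivWithinAt ?_
    rw [hasFDerivAt_pi]
    intro i
    exact (hasFDerivAt_apply i u).exp
  have hinj : Set.InjOn F Set.univ := fun u _ v _ h =>
    funext fun i => Real.exp_injective (congrFun h i)
  have himg : F '' Set.univ = Set.univ.pi (fun _ : ι => Set.Ioi (0 : ℝ)) := by
    ext x
    simp only [Set.image_univ, Set.mem_range, Set.mem_univ_pi, Set.mem_Ioi]
    constructor
    · rintro ⟨u, rfl⟩ i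
      exact Real.exp_pos _
    · exact fun h => ⟨fun i => Real.log (x i), funext fun i => Real.exp_log (h i)⟩
  have hdet : ∀ u, (F' u).det = ∏ i, Real.exp (u i) := by
    intro u
    have : ((F' u : (ι → ℝ) →L[ℝ] (ι → ℝ)) : (ι → ℝ) →ₗ[ℝ] (ι → ℝ)) =
        Matrix.toLin' (Matrix.diagonal fun i => Real.exp (u i)) := by
      refine LinearMap.ext fun v => funext fun i => ?_
      simp [F', Matrix.mulVec_diagonal]
    rw [ContinuousLinearMap.det, this, LinearMap.det_toLin', Matrix.det_diagonal]
  rw [← himg, integral_image_eq_integral_abs_det_fderiv_smul volume MeasurableSet.univ hF hinj]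
  simp only [hdet, setIntegral_univ, smul_eq_mul]
  refine integral_congr_ae (Filter.Eventually.of_forall fun u => ?_)
  simp only [F]
  rw [abs_of_pos (Finset.prod_pos fun i _ => Real.exp_pos _)]

theorem prod_exp_mul_cauchyWeight_eq_logDensity (n : ℕ) (a b β : ℝ) (u : Fin n → ℝ) :
    (∏ i, Real.exp (u i)) *
      ((∏ i, Real.exp (u i) ^ a * (1 + Real.exp (u i)) ^ (-b)) *
        interaction n β fun i => Real.exp (u i)) = logDensity a b β 0 u := by
  rw [logDensity, interaction_eq_prod_erase, ← mul_assoc, ← Finset.prod_mul_distrib]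
  simp only [add_zero]
  congr 1
  refine Finset.prod_congr rfl fun i _ => ?_
  rw [← Real.exp_mul, ← mul_assoc, ← Real.exp_add]
  congr 2
  ring

theorem logDensity_nonneg {ι : Type*} [Fintype ι] [DecidableEq ι] (a b β : ℝ) {ε : ℝ}
    (hε : 0 ≤ ε) (u : ι → ℝ) : 0 ≤ logDensity a b β ε u := by
  refine mul_nonneg (Finset.prod_nonneg fun i _ => by positivity)
    (Finset.prod_nonneg fun i _ => Finset.prod_nonneg fun j _ => by positivity)

theorem logDensity_comp_equiv {ι : Type*} [Fintype ι] [DecidableEq ι] (a b β ε : ℝ)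
    (σ : Equiv.Perm ι) (u : ι → ℝ) :
    logDensity a b β ε (fun i => u (σ i)) = logDensity a b β ε u := by
  unfold logDensity
  congr 1
  · exact Equiv.prod_comp σ
      fun i => Real.exp ((a + 1) * u i) * (1 + Real.exp (u i)) ^ (-b)
  · refine Eq.trans ?_ (Equiv.prod_comp σ fun i => ∏ j ∈ Finset.univ.erase i,
      ((Real.exp (u i) - Real.exp (u j)) ^ 2 + ε) ^ (β / 4))
    refine Finset.prod_congr rfl fun i _ => ?_
    refine Finset.prod_equiv σ (fun j => by simp) fun j _ => rfl

theorem piCongrLeft_symm_eq_comp {ι : Type*} (σ : Equiv.Perm ι) (u : ι → ℝ) :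
    MeasurableEquiv.piCongrLeft (fun _ : ι => ℝ) σ.symm u = fun i => u (σ i) := by
  funext i
  have := MeasurableEquiv.piCongrLeft_apply_apply (β := fun _ : ι => ℝ) σ.symm u (σ i)
  simpa using this

theorem integral_comp_perm {ι : Type*} [Fintype ι] (σ : Equiv.Perm ι) (f : (ι → ℝ) → ℝ) :
    ∫ u : ι → ℝ, f (fun i => u (σ i)) = ∫ u, f u := by
  simp_rw [← piCongrLeft_symm_eq_comp]
  exact (volume_measurePreserving_piCongrLeft (fun _ : ι => ℝ) σ.symm).integral_comp' f

theorem integrable_comp_perm {ι : Type*} [Fintype ι] (σ : Equiv.Perm ι) {f : (ι → ℝ) → ℝ}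
    (hf : Integrable f) : Integrable fun u : ι → ℝ => f (fun i => u (σ i)) := by
  simp_rw [← piCongrLeft_symm_eq_comp]
  exact (volume_measurePreserving_piCongrLeft (fun _ : ι => ℝ) σ.symm).integrable_comp_of_integrable
    hf

theorem integrable_exp_mul_one_add_exp_rpow {s c : ℝ} (hs : 0 < s) (hc : s < c) :
    Integrable fun u : ℝ => Real.exp (s * u) * (1 + Real.exp u) ^ (-c) := by
  have hcont : Continuous fun u : ℝ => Real.exp (s * u) * (1 + Real.exp u) ^ (-c) := by
    refine Continuous.mul (by fun_prop) (Continuous.rpow_const (by fun_prop) fun u => ?_)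
    exact Or.inl (by positivity)
  rw [← integrableOn_univ, ← Set.Iic_union_Ioi (a := (0 : ℝ))]
  refine IntegrableOn.union ?_ ?_
  · refine (integrableOn_exp_mul_Iic hs 0).mono' hcont.aestronglyMeasurable
      (Filter.Eventually.of_forall fun u => ?_)
    rw [Real.norm_of_nonneg (by positivity)]
    refine mul_le_of_le_one_right (Real.exp_pos _).le ?_
    exact Real.rpow_le_one_of_one_le_of_nonpos (by linarith [Real.exp_pos u]) (by linarith)
  · refine (integrableOn_exp_mul_Ioi (a := s - c) (by linarith) 0).mono'
      hcont.aestronglyMeasurable (Filter.Eventually.of_forall fun u => ?_)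
    rw [Real.norm_of_nonneg (by positivity)]
    calc Real.exp (s * u) * (1 + Real.exp u) ^ (-c)
        ≤ Real.exp (s * u) * Real.exp u ^ (-c) := by
          refine mul_le_mul_of_nonneg_left ?_ (Real.exp_pos _).le
          exact Real.rpow_le_rpow_of_nonpos (Real.exp_pos u) (by linarith) (by linarith)
      _ = Real.exp ((s - c) * u) := by
          rw [← Real.exp_mul, ← Real.exp_add]
          congr 1
          ring

theorem integrable_prod_exp_mul_one_add_exp_rpow {ι : Type*} [Fintype ι] {s c : ℝ} (hs : 0 < s)
    (hc : s < c) :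
    Integrable fun u : ι → ℝ => ∏ i, Real.exp (s * u i) * (1 + Real.exp (u i)) ^ (-c) :=
  Integrable.fintype_prod (f := fun (_ : ι) u => Real.exp (s * u) * (1 + Real.exp u) ^ (-c))
    fun _ => integrable_exp_mul_one_add_exp_rpow hs hc

theorem prod_interaction_le {ι : Type*} [Fintype ι] [DecidableEq ι] {β ε : ℝ} (hβ : 0 ≤ β)
    (hε : 0 ≤ ε) (hε' : ε ≤ 1) (u : ι → ℝ) :
    ∏ i, ∏ j ∈ Finset.univ.erase i, ((Real.exp (u i) - Real.exp (u j)) ^ 2 + ε) ^ (β / 4) ≤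
      ∏ i, (1 + Real.exp (u i)) ^ (((Fintype.card ι : ℝ) - 1) * β) := by
  have key : ∀ i j, ((Real.exp (u i) - Real.exp (u j)) ^ 2 + ε) ^ (β / 4) ≤
      (1 + Real.exp (u i)) ^ (β / 2) * (1 + Real.exp (u j)) ^ (β / 2) := by
    intro i j
    have hx := Real.exp_pos (u i)
    have hy := Real.exp_pos (u j)
    set x := Real.exp (u i)
    set y := Real.exp (u j)
    rw [← Real.mul_rpow (by positivity) (by positivity),
      show β / 2 = 2 * (β / 4) by ring, Real.rpow_mul (by positivity)]
    refine Real.rpow_le_rpow (by positivity) ?_ (by positivity)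
    norm_num
    nlinarith [mul_pos hx hy, mul_pos (mul_pos hx hy) hx, mul_pos (mul_pos hx hy) hy,
      mul_pos (mul_pos hx hy) (mul_pos hx hy)]
  calc _ ≤ ∏ i, ∏ j ∈ Finset.univ.erase i,
        ((1 + Real.exp (u i)) ^ (β / 2) * (1 + Real.exp (u j)) ^ (β / 2)) :=
        Finset.prod_le_prod (fun i _ => Finset.prod_nonneg fun j _ => by positivity)
          fun i _ => Finset.prod_le_prod (fun j _ => by positivity) fun j _ => key i j
    _ = ∏ i, (1 + Real.exp (u i)) ^ (((Fintype.card ι : ℝ) - 1) * β) := by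
        simp_rw [Finset.prod_mul_distrib]
        rw [prod_prod_erase_comm fun i j => (1 + Real.exp (u j)) ^ (β / 2),
          ← Finset.prod_mul_distrib]
        refine Finset.prod_congr rfl fun i _ => ?_
        have hc : ((Finset.univ.erase i).card : ℝ) = (Fintype.card ι : ℝ) - 1 := by
          rw [Finset.card_erase_of_mem (Finset.mem_univ i), Finset.card_univ,
            Nat.cast_pred (Fintype.card_pos_iff.mpr ⟨i⟩)]
        have hp : (0 : ℝ) < 1 + Real.exp (u i) := by positivity
        rw [Finset.prod_const, ← Real.rpow_natCast, ← Real.rpow_mul hp.le, ← Real.rpow_add hp, hc]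
        congr 1
        ring

theorem logDensity_mul_pow_le {ι : Type*} [Fintype ι] [DecidableEq ι] {a b β ε : ℝ} (hβ : 0 ≤ β)
    (hε : 0 ≤ ε) (hε' : ε ≤ 1) (l : ℕ) (u : ι → ℝ) :
    logDensity a b β ε u * (∏ i, (1 + Real.exp (u i))) ^ l ≤
      ∏ i, Real.exp ((a + 1) * u i) *
        (1 + Real.exp (u i)) ^ (-(b - ((Fintype.card ι : ℝ) - 1) * β - l)) := by
  calc logDensity a b β ε u * (∏ i, (1 + Real.exp (u i))) ^ l
      ≤ ((∏ i, Real.exp ((a + 1) * u i) * (1 + Real.exp (u i)) ^ (-b)) *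
          ∏ i, (1 + Real.exp (u i)) ^ (((Fintype.card ι : ℝ) - 1) * β)) *
            (∏ i, (1 + Real.exp (u i))) ^ l := by
        refine mul_le_mul_of_nonneg_right (mul_le_mul_of_nonneg_left
          (prod_interaction_le hβ hε hε' u) ?_) ?_
        · exact Finset.prod_nonneg fun i _ => by positivity
        · exact pow_nonneg (Finset.prod_nonneg fun i _ => by positivity) _
    _ = _ := by
        rw [← Finset.prod_pow, ← Finset.prod_mul_distrib, ← Finset.prod_mul_distrib]
        refine Finset.prod_congr rfl fun i _ => ?_
        have hp : (0 : ℝ) < 1 + Real.exp (u i) := by positivity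
        rw [← Real.rpow_natCast, mul_assoc, mul_assoc, ← Real.rpow_add hp, ← Real.rpow_add hp]
        congr 2
        ring

theorem continuous_logDensity {ι : Type*} [Fintype ι] [DecidableEq ι] (a b : ℝ) {β : ℝ}
    (hβ : 0 ≤ β) (ε : ℝ) : Continuous (logDensity (ι := ι) a b β ε) := by
  refine Continuous.mul (continuous_finsetProd _ fun i _ => ?_)
    (continuous_finsetProd _ fun i _ => continuous_finsetProd _ fun j _ => ?_)
  · refine Continuous.mul (by fun_prop) (Continuous.rpow_const (by fun_prop) fun u => ?_)
    exact Or.inl (by positivity)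
  · exact Continuous.rpow_const (by fun_prop) fun u => Or.inr (by positivity)

theorem continuous_logDensity_regularisation {ι : Type*} [Fintype ι] [DecidableEq ι] (a b : ℝ)
    {β : ℝ} (hβ : 0 ≤ β) (u : ι → ℝ) : Continuous fun ε => logDensity a b β ε u := by
  refine continuous_const.mul
    (continuous_finsetProd _ fun i _ => continuous_finsetProd _ fun j _ => ?_)
  exact Continuous.rpow_const (by fun_prop) fun u => Or.inr (by positivity)

theorem logDensity_eq_exp {ι : Type*} [Fintype ι] [DecidableEq ι] (a b β : ℝ) {ε : ℝ}
    (hε : 0 < ε) (u : ι → ℝ) :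
    logDensity a b β ε u = Real.exp
      (∑ i, ((a + 1) * u i - b * Real.log (1 + Real.exp (u i))) +
        ∑ i, ∑ j ∈ Finset.univ.erase i,
          β / 4 * Real.log ((Real.exp (u i) - Real.exp (u j)) ^ 2 + ε)) := by
  rw [Real.exp_add, Real.exp_sum, Real.exp_sum, logDensity]
  congr 1
  · refine Finset.prod_congr rfl fun i _ => ?_
    rw [Real.rpow_def_of_pos (by positivity), ← Real.exp_add]
    congr 1
    ring
  · refine Finset.prod_congr rfl fun i _ => ?_
    rw [Real.exp_sum]
    refine Finset.prod_congr rfl fun j _ => ?_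
    rw [Real.rpow_def_of_pos (by positivity), mul_comm]

theorem hasLineDerivAt_logDensity {ι : Type*} [Fintype ι] [DecidableEq ι] (a b β : ℝ) {ε : ℝ}
    (hε : 0 < ε) (u : ι → ℝ) (m : ι) :
    HasLineDerivAt ℝ (logDensity a b β ε)
      (logDensity a b β ε u * (a + 1 - b * (Real.exp (u m) / (1 + Real.exp (u m))) +
        β * ∑ j ∈ Finset.univ.erase m, Real.exp (u m) * (Real.exp (u m) - Real.exp (u j)) /
          ((Real.exp (u m) - Real.exp (u j)) ^ 2 + ε))) u (Pi.single m 1) := by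
  let δ : ι → ℝ := Pi.single m 1
  have hδ : ∀ i, δ i = if i = m then 1 else 0 := fun i => by simp [δ, Pi.single_apply]
  have hv : ∀ i, HasDerivAt (fun t : ℝ => (u + t • δ) i) (δ i) 0 := by
    intro i
    simpa using ((hasDerivAt_id (0 : ℝ)).mul_const (δ i)).const_add (u i)
  have h00 : u + (0 : ℝ) • δ = u := by simp
  have h0 : ∀ i, (u + (0 : ℝ) • δ) i = u i := fun i => congrFun h00 i
  have he : ∀ i, HasDerivAt (fun t : ℝ => Real.exp ((u + t • δ) i))
      (Real.exp (u i) * δ i) 0 := fun i => by simpa [h0] using (hv i).exp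
  have h1 : ∀ i, HasDerivAt
      (fun t : ℝ => (a + 1) * (u + t • δ) i - b * Real.log (1 + Real.exp ((u + t • δ) i)))
      ((a + 1) * δ i - b * (Real.exp (u i) * δ i / (1 + Real.exp (u i)))) 0 := by
    intro i
    have := ((he i).const_add 1).log (by positivity)
    rw [h0] at this
    exact ((hv i).const_mul _).sub (this.const_mul b)
  have h2 : ∀ i j, HasDerivAt
      (fun t : ℝ => β / 4 * Real.log
        ((Real.exp ((u + t • δ) i) - Real.exp ((u + t • δ) j)) ^ 2 + ε))
      (β / 4 * (2 * (Real.exp (u i) - Real.exp (u j)) *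
        (Real.exp (u i) * δ i - Real.exp (u j) * δ j) /
          ((Real.exp (u i) - Real.exp (u j)) ^ 2 + ε))) 0 := by
    intro i j
    have := ((((he i).sub (he j)).pow 2).add_const ε).log (by simp only [Pi.pow_apply]; positivity)
    simp only [Pi.sub_apply, Pi.pow_apply, h0] at this
    convert! this.const_mul (β / 4) using 2
    norm_num
  have h3 := ((HasDerivAt.fun_sum fun i (_ : i ∈ Finset.univ) => h1 i).add
    (HasDerivAt.fun_sum fun i (_ : i ∈ Finset.univ) =>
      HasDerivAt.fun_sum fun j (_ : j ∈ Finset.univ.erase i) => h2 i j)).exp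
  unfold HasLineDerivAt
  simp only [logDensity_eq_exp a b β hε]
  refine h3.congr_deriv ?_
  simp only [Pi.add_apply (_ : ℝ → ℝ), h00]
  congr 1
  have hz : ∀ i, (β / 4 * (2 * (Real.exp (u i) - Real.exp (u i)) *
        (Real.exp (u i) * δ i - Real.exp (u i) * δ i) /
          ((Real.exp (u i) - Real.exp (u i)) ^ 2 + ε))) = 0 := by simp
  have hz' : Real.exp (u m) * (Real.exp (u m) - Real.exp (u m)) /
      ((Real.exp (u m) - Real.exp (u m)) ^ 2 + ε) = 0 := by simp
  rw [Finset.sum_erase (f := fun j => Real.exp (u m) * (Real.exp (u m) - Real.exp (u j)) /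
    ((Real.exp (u m) - Real.exp (u j)) ^ 2 + ε)) _ hz']
  simp_rw [fun i => Finset.sum_erase (s := Finset.univ) (a := i) (f := fun j =>
    (β / 4 * (2 * (Real.exp (u i) - Real.exp (u j)) *
        (Real.exp (u i) * δ i - Real.exp (u j) * δ j) /
          ((Real.exp (u i) - Real.exp (u j)) ^ 2 + ε)))) (hz i)]
  congr 1
  · simp [hδ, Finset.sum_sub_distrib, ite_div]
  · have hs : ∀ i j, β / 4 * (2 * (Real.exp (u i) - Real.exp (u j)) *
        (Real.exp (u i) * δ i - Real.exp (u j) * δ j) /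
          ((Real.exp (u i) - Real.exp (u j)) ^ 2 + ε)) =
        (if i = m then β / 2 * (Real.exp (u m) * (Real.exp (u m) - Real.exp (u j)) /
          ((Real.exp (u m) - Real.exp (u j)) ^ 2 + ε)) else 0) +
        (if j = m then β / 2 * (Real.exp (u m) * (Real.exp (u m) - Real.exp (u i)) /
          ((Real.exp (u m) - Real.exp (u i)) ^ 2 + ε)) else 0) := by
      intro i j
      rw [hδ, hδ]
      have hp := add_pos_of_nonneg_of_pos (sq_nonneg (Real.exp (u i) - Real.exp (u j))) hε
      have hq : (Real.exp (u j) - Real.exp (u i)) ^ 2 = (Real.exp (u i) - Real.exp (u j)) ^ 2 := by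
        ring
      split_ifs with hi hj hj
      · subst hi; subst hj; simp
      · subst hi; field_simp; ring
      · subst hj; rw [hq]; field_simp; ring
      · simp
    simp_rw [hs, Finset.sum_add_distrib]
    rw [Finset.sum_comm]
    simp only [Finset.sum_ite_eq', Finset.mem_univ, if_true, ← Finset.mul_sum]
    ring

theorem hasLineDerivAt_prod_exp_mul_logDensity {ι : Type*} [Fintype ι] [DecidableEq ι]
    (a b β : ℝ) {ε : ℝ} (hε : 0 < ε) (u : ι → ℝ) {m : ι} {S : Finset ι} (hm : m ∉ S) :
    HasLineDerivAt ℝ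
      (fun u => (∏ i ∈ S, Real.exp (u i)) * (1 + Real.exp (u m)) * logDensity a b β ε u)
      ((a + 1) * ((∏ i ∈ S, Real.exp (u i)) * logDensity a b β ε u) +
        (a + 2 - b) * ((∏ i ∈ S, Real.exp (u i)) * Real.exp (u m) * logDensity a b β ε u) +
        β * ∑ j ∈ Finset.univ.erase m, (∏ i ∈ S, Real.exp (u i)) *
          (Real.exp (u m) * (1 + Real.exp (u m)) * (Real.exp (u m) - Real.exp (u j)) /
            ((Real.exp (u m) - Real.exp (u j)) ^ 2 + ε)) * logDensity a b β ε u)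
      u (Pi.single m 1) := by
  have hW := hasLineDerivAt_logDensity a b β hε u m
  unfold HasLineDerivAt at hW ⊢
  have hS : ∀ t : ℝ, ∏ i ∈ S, Real.exp ((u + t • (Pi.single m 1 : ι → ℝ)) i) =
      ∏ i ∈ S, Real.exp (u i) := fun t => Finset.prod_congr rfl fun i hi => by
    have : i ≠ m := fun h => hm (h ▸ hi)
    simp [this]
  have hv : HasDerivAt (fun t : ℝ => (u + t • (Pi.single m 1 : ι → ℝ)) m) 1 0 := by
    simpa using (hasDerivAt_id (0 : ℝ)).const_add (u m)
  simp only [hS]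
  have h0 : u + (0 : ℝ) • (Pi.single m 1 : ι → ℝ) = u := by simp
  have h := (((hv.exp.const_add 1).const_mul (∏ i ∈ S, Real.exp (u i))).mul hW)
  rw [h0] at h
  refine h.congr_deriv ?_
  have hs : ∑ j ∈ Finset.univ.erase m, (∏ i ∈ S, Real.exp (u i)) *
          (Real.exp (u m) * (1 + Real.exp (u m)) * (Real.exp (u m) - Real.exp (u j)) /
            ((Real.exp (u m) - Real.exp (u j)) ^ 2 + ε)) * logDensity a b β ε u =
      (∏ i ∈ S, Real.exp (u i)) * (1 + Real.exp (u m)) * logDensity a b β ε u *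
        ∑ j ∈ Finset.univ.erase m, Real.exp (u m) * (Real.exp (u m) - Real.exp (u j)) /
          ((Real.exp (u m) - Real.exp (u j)) ^ 2 + ε) := by
    rw [Finset.mul_sum]
    refine Finset.sum_congr rfl fun j _ => ?_
    ring
  rw [hs]
  have hp : 1 + Real.exp (u m) ≠ 0 := by positivity
  field_simp
  ring

theorem one_le_prod_one_add_exp {ι : Type*} [Fintype ι] (u : ι → ℝ) :
    1 ≤ ∏ i, (1 + Real.exp (u i)) :=
  Finset.prod_induction _ (fun x => 1 ≤ x) (fun _ _ => one_le_mul_of_one_le_of_one_le) le_rfl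
    fun i _ => by linarith [Real.exp_pos (u i)]

section Integrals

variable {ι : Type*} [Fintype ι] [DecidableEq ι]

theorem prod_exp_mul_one_add_exp_le (u : ι → ℝ) {m : ι} {S : Finset ι} (hm : m ∉ S) :
    (∏ i ∈ S, Real.exp (u i)) * (1 + Real.exp (u m)) ≤ ∏ i, (1 + Real.exp (u i)) := by
  have h1 : ∀ i, 1 ≤ 1 + Real.exp (u i) := fun i => by linarith [Real.exp_pos (u i)]
  have h2 : ∏ i ∈ S, Real.exp (u i) ≤ ∏ i ∈ S, (1 + Real.exp (u i)) :=
    Finset.prod_le_prod (fun i _ => (Real.exp_pos _).le) fun i _ => by linarith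
  have h3 : 1 ≤ ∏ i ∈ Sᶜ.erase m, (1 + Real.exp (u i)) :=
    Finset.prod_induction _ (fun x => 1 ≤ x) (fun _ _ => one_le_mul_of_one_le_of_one_le) le_rfl
      fun i _ => h1 i
  rw [← Finset.prod_mul_prod_compl S, ← Finset.mul_prod_erase Sᶜ _ (Finset.mem_compl.mpr hm)]
  have h4 := le_mul_of_one_le_right (zero_le_one.trans (h1 m)) h3
  exact mul_le_mul h2 h4 (zero_le_one.trans (h1 m)) (Finset.prod_nonneg fun i _ =>
    zero_le_one.trans (h1 i))

theorem prod_exp_le_pow (u : ι → ℝ) {S : Finset ι} {l : ℕ} (hS : S.card ≤ l) :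
    ∏ i ∈ S, Real.exp (u i) ≤ (∏ i, (1 + Real.exp (u i))) ^ l := by
  have hP := one_le_prod_one_add_exp u
  rcases S.eq_empty_or_nonempty with rfl | ⟨m, hm⟩
  · simpa using one_le_pow₀ hP
  · have h := prod_exp_mul_one_add_exp_le u (Finset.notMem_erase m S)
    have h' : ∏ i ∈ S, Real.exp (u i) ≤
        (∏ i ∈ S.erase m, Real.exp (u i)) * (1 + Real.exp (u m)) := by
      rw [← Finset.prod_erase_mul S _ hm]
      exact mul_le_mul_of_nonneg_left (by linarith)
        (Finset.prod_nonneg fun i _ => (Real.exp_pos _).le)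
    have hl : l ≠ 0 := by
      have := Finset.card_pos.mpr ⟨m, hm⟩
      omega
    exact (h'.trans h).trans (le_self_pow₀ hP hl)

variable {a b β : ℝ} {l : ℕ}

theorem norm_mul_logDensity_le (hβ : 0 ≤ β) {ε C y : ℝ} (hε : 0 ≤ ε) (hε' : ε ≤ 1) (u : ι → ℝ)
    (hC : 0 ≤ C) (hy : |y| ≤ C * (∏ i, (1 + Real.exp (u i))) ^ l) :
    ‖y * logDensity a b β ε u‖ ≤ C * ∏ i, Real.exp ((a + 1) * u i) *
        (1 + Real.exp (u i)) ^ (-(b - ((Fintype.card ι : ℝ) - 1) * β - l)) := by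
  have h0 := logDensity_nonneg a b β hε u
  rw [norm_mul, Real.norm_of_nonneg h0, Real.norm_eq_abs]
  calc _ ≤ C * (∏ i, (1 + Real.exp (u i))) ^ l * logDensity a b β ε u :=
        mul_le_mul_of_nonneg_right hy h0
    _ = C * (logDensity a b β ε u * (∏ i, (1 + Real.exp (u i))) ^ l) := by ring
    _ ≤ _ := mul_le_mul_of_nonneg_left (logDensity_mul_pow_le hβ hε hε' l u) hC

theorem integrable_mul_logDensity (hβ : 0 ≤ β) (ha : -1 < a)
    (hb : a + ((Fintype.card ι : ℝ) - 1) * β + l + 1 < b) {ε C : ℝ} (hε : 0 ≤ ε) (hε' : ε ≤ 1)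
    (hC : 0 ≤ C) {g : (ι → ℝ) → ℝ} (hg : Continuous g)
    (hgC : ∀ u, |g u| ≤ C * (∏ i, (1 + Real.exp (u i))) ^ l) :
    Integrable fun u => g u * logDensity a b β ε u := by
  refine ((integrable_prod_exp_mul_one_add_exp_rpow (s := a + 1) (by linarith)
    (by linarith)).const_mul C).mono'
    (hg.mul (continuous_logDensity a b hβ ε)).aestronglyMeasurable
    (Filter.Eventually.of_forall fun u => norm_mul_logDensity_le hβ hε hε' u hC (hgC u))

theorem tendsto_integral_mul_logDensity (hβ : 0 ≤ β) (ha : -1 < a)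
    (hb : a + ((Fintype.card ι : ℝ) - 1) * β + l + 1 < b) {C : ℝ} (hC : 0 ≤ C)
    {g : ℝ → (ι → ℝ) → ℝ} {g₀ : (ι → ℝ) → ℝ} (hg : ∀ ε, 0 < ε → Continuous (g ε))
    (hgC : ∀ ε, 0 < ε → ∀ u, |g ε u| ≤ C * (∏ i, (1 + Real.exp (u i))) ^ l)
    (hlim : ∀ u, Filter.Tendsto (fun ε => g ε u * logDensity a b β ε u)
      (nhdsWithin 0 (Set.Ioi 0)) (nhds (g₀ u * logDensity a b β 0 u))) :
    Filter.Tendsto (fun ε => ∫ u, g ε u * logDensity a b β ε u)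
      (nhdsWithin 0 (Set.Ioi 0)) (nhds (∫ u, g₀ u * logDensity a b β 0 u)) := by
  have hmem : Set.Ioc (0 : ℝ) 1 ∈ nhdsWithin (0 : ℝ) (Set.Ioi 0) :=
    Ioc_mem_nhdsGT zero_lt_one
  refine tendsto_integral_filter_of_dominated_convergence
    (fun u => C * ∏ i, Real.exp ((a + 1) * u i) *
        (1 + Real.exp (u i)) ^ (-(b - ((Fintype.card ι : ℝ) - 1) * β - l))) ?_ ?_ ?_ ?_
  · filter_upwards [hmem] with ε hε
    exact ((hg ε hε.1).mul (continuous_logDensity a b hβ ε)).aestronglyMeasurable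
  · filter_upwards [hmem] with ε hε
    exact Filter.Eventually.of_forall fun u =>
      norm_mul_logDensity_le hβ hε.1.le hε.2 u hC (hgC ε hε.1 u)
  · exact (integrable_prod_exp_mul_one_add_exp_rpow (s := a + 1) (by linarith)
      (by linarith)).const_mul C
  · exact Filter.Eventually.of_forall hlim

theorem integrable_prod_exp_mul_logDensity (hβ : 0 ≤ β) (ha : -1 < a)
    (hb : a + ((Fintype.card ι : ℝ) - 1) * β + l + 1 < b) {S : Finset ι} (hS : S.card ≤ l)
    {ε : ℝ} (hε : 0 ≤ ε) (hε' : ε ≤ 1) :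
    Integrable fun u : ι → ℝ => (∏ i ∈ S, Real.exp (u i)) * logDensity a b β ε u := by
  refine integrable_mul_logDensity hβ ha hb hε hε' zero_le_one (by fun_prop) fun u => ?_
  rw [one_mul, abs_of_nonneg (Finset.prod_nonneg fun i _ => (Real.exp_pos _).le)]
  exact prod_exp_le_pow u hS

theorem tendsto_integral_prod_exp_mul_logDensity (hβ : 0 ≤ β) (ha : -1 < a)
    (hb : a + ((Fintype.card ι : ℝ) - 1) * β + l + 1 < b) {S : Finset ι} (hS : S.card ≤ l) :
    Filter.Tendsto
      (fun ε => ∫ u : ι → ℝ, (∏ i ∈ S, Real.exp (u i)) * logDensity a b β ε u)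
      (nhdsWithin 0 (Set.Ioi 0))
      (nhds (∫ u : ι → ℝ, (∏ i ∈ S, Real.exp (u i)) * logDensity a b β 0 u)) := by
  refine tendsto_integral_mul_logDensity hβ ha hb zero_le_one
    (g := fun _ u => ∏ i ∈ S, Real.exp (u i)) (fun _ _ => by fun_prop) (fun _ _ u => ?_) fun u => ?_
  · rw [one_mul, abs_of_nonneg (Finset.prod_nonneg fun i _ => (Real.exp_pos _).le)]
    exact prod_exp_le_pow u hS
  · exact ((continuous_logDensity_regularisation a b hβ u).tendsto 0).mono_left
      nhdsWithin_le_nhds |>.const_mul _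

theorem logDensity_zero_of_eq (hβ : 0 < β) {u : ι → ℝ} {i j : ι} (hij : i ≠ j)
    (h : u i = u j) : logDensity a b β 0 u = 0 := by
  refine mul_eq_zero_of_right _ (Finset.prod_eq_zero (Finset.mem_univ i)
    (Finset.prod_eq_zero (Finset.mem_erase.mpr ⟨hij.symm, Finset.mem_univ j⟩) ?_))
  rw [h, sub_self, zero_pow two_ne_zero, add_zero, Real.zero_rpow (by positivity)]

/-- The mollified interaction kernel `d² / (d² + ε)` becomes trivial as `ε → 0`. -/
theorem tendsto_integral_kernel_mul_logDensity (hβ : 0 < β) (ha : -1 < a)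
    (hb : a + ((Fintype.card ι : ℝ) - 1) * β + l + 1 < b) {C : ℝ} (hC : 0 ≤ C)
    {i j : ι} (hij : i ≠ j) {f : (ι → ℝ) → ℝ} (hf : Continuous f)
    (hfC : ∀ u, |f u| ≤ C * (∏ i, (1 + Real.exp (u i))) ^ l) :
    Filter.Tendsto (fun ε => ∫ u, f u * ((Real.exp (u i) - Real.exp (u j)) ^ 2 /
        ((Real.exp (u i) - Real.exp (u j)) ^ 2 + ε)) * logDensity a b β ε u)
      (nhdsWithin 0 (Set.Ioi 0)) (nhds (∫ u, f u * logDensity a b β 0 u)) := by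
  refine tendsto_integral_mul_logDensity hβ.le ha hb hC (g := fun ε u =>
    f u * ((Real.exp (u i) - Real.exp (u j)) ^ 2 /
        ((Real.exp (u i) - Real.exp (u j)) ^ 2 + ε))) (fun ε hε => ?_) (fun ε hε u => ?_)
    fun u => ?_
  · refine hf.mul (Continuous.div (by fun_prop) (by fun_prop) fun u => ?_)
    positivity
  · refine le_trans ?_ (hfC u)
    rw [abs_mul]
    refine mul_le_of_le_one_right (abs_nonneg _) ?_
    rw [abs_of_nonneg (by positivity)]
    exact div_le_one_of_le₀ (by linarith) (by positivity)
  · have hW : Filter.Tendsto (fun ε => logDensity a b β ε u) (nhdsWithin 0 (Set.Ioi 0))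
        (nhds (logDensity a b β 0 u)) :=
      ((continuous_logDensity_regularisation a b hβ.le u).tendsto 0).mono_left nhdsWithin_le_nhds
    by_cases h : u i = u j
    · simp [h, logDensity_zero_of_eq hβ hij h]
    · have hd : (Real.exp (u i) - Real.exp (u j)) ^ 2 ≠ 0 :=
        pow_ne_zero _ (sub_ne_zero.mpr fun h' => h (Real.exp_injective h'))
      have hK : Filter.Tendsto (fun ε => (Real.exp (u i) - Real.exp (u j)) ^ 2 /
          ((Real.exp (u i) - Real.exp (u j)) ^ 2 + ε)) (nhdsWithin 0 (Set.Ioi 0)) (nhds 1) := by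
        have : ContinuousAt (fun ε => (Real.exp (u i) - Real.exp (u j)) ^ 2 /
          ((Real.exp (u i) - Real.exp (u j)) ^ 2 + ε)) 0 :=
          continuousAt_const.div (by fun_prop) (by simpa using hd)
        have h2 := this.tendsto.mono_left (nhdsWithin_le_nhds (s := Set.Ioi 0))
        simpa [div_self hd] using h2
      simpa using (hK.const_mul (f u)).mul hW

/-- Bound for the unsymmetrised interaction term. -/
theorem abs_exp_mul_one_add_exp_mul_div_le {ε : ℝ} (hε : 0 < ε) (hε' : ε ≤ 1) {x y : ℝ}
    (hx : 0 < x) (hy : 0 < y) :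
    |x * (1 + x) * (x - y) / ((x - y) ^ 2 + ε)| ≤ 2 / ε * (x * (1 + y)) := by
  have hp : 0 < (x - y) ^ 2 + ε := by positivity
  rw [abs_div, abs_mul, abs_of_pos (by positivity : 0 < x * (1 + x)), abs_of_pos hp,
    div_le_iff₀ hp, div_mul_eq_mul_div, div_mul_eq_mul_div, le_div_iff₀ hε]
  have h1 : 1 + x ≤ 1 + y + |x - y| := by linarith [le_abs_self (x - y)]
  have h2 : (1 + x) * |x - y| * ε ≤ 2 * (1 + y) * ((x - y) ^ 2 + ε) := by
    rw [← sq_abs (x - y)]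
    have hd := abs_nonneg (x - y)
    set d := |x - y|
    have : (1 + x) * d * ε ≤ (1 + y + d) * d * ε := by gcongr
    have h3 : d ^ 2 * ε ≤ d ^ 2 := mul_le_of_le_one_right (sq_nonneg d) hε'
    have h4 : d * ε ≤ d ^ 2 + ε := by nlinarith [mul_nonneg hd hε.le, sq_nonneg (d - 1)]
    nlinarith [mul_le_mul_of_nonneg_left h4 (by linarith : 0 ≤ 1 + y),
      mul_nonneg hy.le (sq_nonneg d), mul_nonneg hy.le hε.le]
  nlinarith [mul_le_mul_of_nonneg_left h2 hx.le]

theorem integral_interaction_symmetrise {S : Finset ι} {m j : ι} (hm : m ∉ S) {ε : ℝ} (hε : 0 < ε)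
    (hint : Integrable fun u : ι → ℝ => (∏ i ∈ S, Real.exp (u i)) *
      (Real.exp (u m) * (1 + Real.exp (u m)) * (Real.exp (u m) - Real.exp (u j)) /
        ((Real.exp (u m) - Real.exp (u j)) ^ 2 + ε)) * logDensity a b β ε u) :
    ∫ u : ι → ℝ, (∏ i ∈ S, Real.exp (u i)) *
      (Real.exp (u m) * (1 + Real.exp (u m)) * (Real.exp (u m) - Real.exp (u j)) /
        ((Real.exp (u m) - Real.exp (u j)) ^ 2 + ε)) * logDensity a b β ε u =
    (∫ u : ι → ℝ, ((∏ i ∈ S, Real.exp (u i)) *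
      if j ∈ S then Real.exp (u m) else 1 + Real.exp (u m) + Real.exp (u j)) *
        ((Real.exp (u m) - Real.exp (u j)) ^ 2 /
          ((Real.exp (u m) - Real.exp (u j)) ^ 2 + ε)) * logDensity a b β ε u) / 2 := by
  set J : (ι → ℝ) → ℝ := fun u => (∏ i ∈ S, Real.exp (u i)) *
      (Real.exp (u m) * (1 + Real.exp (u m)) * (Real.exp (u m) - Real.exp (u j)) /
        ((Real.exp (u m) - Real.exp (u j)) ^ 2 + ε)) * logDensity a b β ε u with hJ
  have h1 := integral_comp_perm (Equiv.swap m j) J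
  have h2 := integrable_comp_perm (Equiv.swap m j) hint
  rw [eq_div_iff two_ne_zero, mul_two]
  nth_rewrite 2 [← h1]
  rw [← integral_add hint h2]
  refine integral_congr_ae (Filter.Eventually.of_forall fun u => ?_)
  simp only [hJ, logDensity_comp_equiv, Equiv.swap_apply_left, Equiv.swap_apply_right]
  have hp : (Real.exp (u m) - Real.exp (u j)) ^ 2 + ε ≠ 0 := by positivity
  have hq : (Real.exp (u j) - Real.exp (u m)) ^ 2 = (Real.exp (u m) - Real.exp (u j)) ^ 2 := by
    ring
  have hswap : ∀ i, i ≠ m → i ≠ j → Real.exp (u (Equiv.swap m j i)) = Real.exp (u i) :=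
    fun i hi hi' => by rw [Equiv.swap_apply_of_ne_of_ne hi hi']
  rw [hq]
  split_ifs with hj
  · rw [← Finset.mul_prod_erase S _ hj,
      ← Finset.mul_prod_erase S (fun i => Real.exp (u (Equiv.swap m j i))) hj,
      Equiv.swap_apply_right, Finset.prod_congr rfl fun i hi => hswap i
        (fun h => hm (h ▸ Finset.mem_of_mem_erase hi)) (Finset.ne_of_mem_erase hi)]
    field_simp
    ring
  · rw [Finset.prod_congr rfl fun i hi => hswap i (fun h => hm (h ▸ hi)) fun h => hj (h ▸ hi)]
    field_simp
    ring

theorem integral_prod_exp_insert_eq {S : Finset ι} {m j : ι} (hm : m ∉ S) (hj : j ∉ S) :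
    ∫ u : ι → ℝ, (∏ i ∈ insert j S, Real.exp (u i)) * logDensity a b β 0 u =
      ∫ u : ι → ℝ, (∏ i ∈ insert m S, Real.exp (u i)) * logDensity a b β 0 u := by
  rw [← integral_comp_perm (Equiv.swap m j)]
  refine integral_congr_ae (Filter.Eventually.of_forall fun u => ?_)
  simp only [logDensity_comp_equiv]
  rw [Finset.prod_insert hj, Finset.prod_insert hm, Equiv.swap_apply_right]
  congr 2
  refine Finset.prod_congr rfl fun i hi => ?_
  rw [Equiv.swap_apply_of_ne_of_ne (by rintro rfl; exact hm hi) (by rintro rfl; exact hj hi)]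

theorem prod_exp_mul_one_add_exp_le_pow (u : ι → ℝ) {S : Finset ι} {m : ι} (hm : m ∉ S)
    (hl : l ≠ 0) :
    (∏ i ∈ S, Real.exp (u i)) * (1 + Real.exp (u m)) ≤ (∏ i, (1 + Real.exp (u i))) ^ l :=
  (prod_exp_mul_one_add_exp_le u hm).trans (le_self_pow₀ (one_le_prod_one_add_exp u) hl)

theorem abs_prod_exp_mul_ite_le (u : ι → ℝ) {S : Finset ι} {m j : ι} (hm : m ∉ S) (hl : l ≠ 0) :
    |(∏ i ∈ S, Real.exp (u i)) *
      if j ∈ S then Real.exp (u m) else 1 + Real.exp (u m) + Real.exp (u j)| ≤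
      2 * (∏ i, (1 + Real.exp (u i))) ^ l := by
  have hX : 0 ≤ ∏ i ∈ S, Real.exp (u i) := Finset.prod_nonneg fun i _ => (Real.exp_pos _).le
  have h1 := prod_exp_mul_one_add_exp_le_pow u hm hl
  have hx := mul_nonneg hX (Real.exp_pos (u m)).le
  rw [abs_of_nonneg (mul_nonneg hX (by split_ifs <;> positivity))]
  split_ifs with hj
  · linarith
  · have h2 := prod_exp_mul_one_add_exp_le_pow u hj hl
    linarith

theorem abs_prod_exp_mul_interaction_le (u : ι → ℝ) {S : Finset ι} {m j : ι} (hm : m ∉ S)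
    (hmj : m ≠ j) (hS : S.card + 1 ≤ l) {ε : ℝ} (hε : 0 < ε) (hε' : ε ≤ 1) :
    |(∏ i ∈ S, Real.exp (u i)) *
      (Real.exp (u m) * (1 + Real.exp (u m)) * (Real.exp (u m) - Real.exp (u j)) /
        ((Real.exp (u m) - Real.exp (u j)) ^ 2 + ε))| ≤
      2 / ε * (∏ i, (1 + Real.exp (u i))) ^ l := by
  have hX : 0 ≤ ∏ i ∈ S, Real.exp (u i) := Finset.prod_nonneg fun i _ => (Real.exp_pos _).le
  have hP := one_le_prod_one_add_exp u
  rw [abs_mul, abs_of_nonneg hX]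
  have h1 := mul_le_mul_of_nonneg_left (abs_exp_mul_one_add_exp_mul_div_le hε hε'
    (Real.exp_pos (u m)) (Real.exp_pos (u j))) hX
  have h2 : (∏ i ∈ S, Real.exp (u i)) * Real.exp (u m) * (1 + Real.exp (u j)) ≤
      (∏ i, (1 + Real.exp (u i))) ^ l := by
    by_cases hj : j ∈ S
    · have h3 := prod_exp_mul_one_add_exp_le u hm
      have h4 := prod_exp_mul_one_add_exp_le u (Finset.notMem_empty j)
      rw [Finset.prod_empty, one_mul] at h4
      have hl : 2 ≤ l := by
        have := Finset.card_pos.mpr ⟨j, hj⟩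
        omega
      refine le_trans ?_ (pow_le_pow_right₀ hP hl)
      rw [sq]
      exact mul_le_mul (by linarith) h4 (by positivity) (by linarith)
    · have hj' : j ∉ insert m S := by simp [hj, hmj.symm]
      have h3 := prod_exp_mul_one_add_exp_le_pow (l := l) u hj' (by omega)
      rwa [Finset.prod_insert hm, mul_comm (Real.exp (u m))] at h3
  calc _ ≤ _ := h1
    _ = 2 / ε * ((∏ i ∈ S, Real.exp (u i)) * Real.exp (u m) * (1 + Real.exp (u j))) := by ring
    _ ≤ _ := mul_le_mul_of_nonneg_left h2 (by positivity)

theorem integral_regularised_loop_equation (hβ : 0 ≤ β) (ha : -1 < a)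
    (hb : a + ((Fintype.card ι : ℝ) - 1) * β + l + 1 < b) {S : Finset ι} {m : ι} (hm : m ∉ S)
    (hS : S.card + 1 ≤ l) {ε : ℝ} (hε : 0 < ε) (hε' : ε ≤ 1) :
    (a + 1) * (∫ u : ι → ℝ, (∏ i ∈ S, Real.exp (u i)) * logDensity a b β ε u) +
      (a + 2 - b) * (∫ u : ι → ℝ, (∏ i ∈ insert m S, Real.exp (u i)) * logDensity a b β ε u) +
      β * ∑ j ∈ Finset.univ.erase m,
        (∫ u : ι → ℝ, ((∏ i ∈ S, Real.exp (u i)) *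
          if j ∈ S then Real.exp (u m) else 1 + Real.exp (u m) + Real.exp (u j)) *
            ((Real.exp (u m) - Real.exp (u j)) ^ 2 /
              ((Real.exp (u m) - Real.exp (u j)) ^ 2 + ε)) * logDensity a b β ε u) / 2 = 0 := by
  have hi1 := integrable_prod_exp_mul_logDensity (a := a) (b := b) hβ ha hb (S := S)
    (by omega) hε.le hε'
  have hi2 := integrable_prod_exp_mul_logDensity (a := a) (b := b) hβ ha hb (S := insert m S)
    (by rwa [Finset.card_insert_of_notMem hm]) hε.le hε'
  have hiJ : ∀ j ∈ Finset.univ.erase m, Integrable fun u : ι → ℝ => (∏ i ∈ S, Real.exp (u i)) *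
      (Real.exp (u m) * (1 + Real.exp (u m)) * (Real.exp (u m) - Real.exp (u j)) /
        ((Real.exp (u m) - Real.exp (u j)) ^ 2 + ε)) * logDensity a b β ε u := by
    intro j hj
    refine integrable_mul_logDensity (l := l) hβ ha hb hε.le hε' (by positivity : 0 ≤ 2 / ε) ?_
      fun u => abs_prod_exp_mul_interaction_le u hm (Finset.ne_of_mem_erase hj).symm hS hε hε'
    refine Continuous.mul (by fun_prop) (Continuous.div (by fun_prop) (by fun_prop) fun u => ?_)
    positivity
  have hsum : ∀ j ∈ Finset.univ.erase m, _ := fun j hj =>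
    integral_interaction_symmetrise (a := a) (b := b) (β := β) hm hε (hiJ j hj)
  rw [← Finset.sum_congr rfl hsum, ← integral_finsetSum _ hiJ, ← integral_const_mul,
    ← integral_const_mul, ← integral_const_mul,
    ← integral_add (hi1.const_mul _) (hi2.const_mul _),
    ← integral_add ((hi1.const_mul _).fun_add (hi2.const_mul _))
      ((integrable_finsetSum _ hiJ).const_mul _)]
  have hD := fun u : ι → ℝ => hasLineDerivAt_prod_exp_mul_logDensity a b β hε u hm
  have hins : ∀ u : ι → ℝ, (∏ i ∈ S, Real.exp (u i)) * Real.exp (u m) =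
      ∏ i ∈ insert m S, Real.exp (u i) := fun u => by rw [Finset.prod_insert hm, mul_comm]
  simp_rw [hins] at hD
  have hG : Integrable fun u : ι → ℝ =>
      (∏ i ∈ S, Real.exp (u i)) * (1 + Real.exp (u m)) * logDensity a b β ε u := by
    refine integrable_mul_logDensity (l := l) hβ ha hb hε.le hε' zero_le_one (by fun_prop)
      fun u => ?_
    rw [one_mul, abs_of_nonneg (mul_nonneg
      (Finset.prod_nonneg fun i _ => (Real.exp_pos _).le) (by positivity))]
    exact prod_exp_mul_one_add_exp_le_pow u hm (by omega)
  have hG' := ((hi1.const_mul (a + 1)).fun_add (hi2.const_mul (a + 2 - b))).fun_add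
    ((integrable_finsetSum _ hiJ).const_mul β)
  have h := integral_bilinear_hasLineDerivAt_right_eq_neg_left_of_integrable
    (B := ContinuousLinearMap.mul ℝ ℝ) (g := fun _ : ι → ℝ => (1 : ℝ)) (g' := fun _ => 0)
    (by simpa using hG') (by simp) (by simpa using hG) (fun u _ => hD u)
    (fun u _ => hasDerivAt_const (0 : ℝ) (1 : ℝ))
  simpa using h.symm

/-- The recursion behind Aomoto's evaluation of the averages of `x₁ ⋯ x_k`. -/
theorem integral_prod_exp_insert_recursion (hβ : 0 < β) (ha : -1 < a)
    (hb : a + ((Fintype.card ι : ℝ) - 1) * β + l + 1 < b) {S : Finset ι} {m : ι} (hm : m ∉ S)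
    (hS : S.card + 1 ≤ l) :
    (a + 1 + ((Fintype.card ι : ℝ) - (S.card + 1)) * β / 2) *
        (∫ u : ι → ℝ, (∏ i ∈ S, Real.exp (u i)) * logDensity a b β 0 u) =
      (b - a - 2 - (2 * (Fintype.card ι : ℝ) - (S.card + 1) - 1) * β / 2) *
        ∫ u : ι → ℝ, (∏ i ∈ insert m S, Real.exp (u i)) * logDensity a b β 0 u := by
  have hcard : (insert m S).card ≤ l := by rwa [Finset.card_insert_of_notMem hm]
  set I : Finset ι → ℝ := fun S =>
    ∫ u : ι → ℝ, (∏ i ∈ S, Real.exp (u i)) * logDensity a b β 0 u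
  have hlim := ((tendsto_integral_prod_exp_mul_logDensity (a := a) (b := b) hβ.le ha hb
    (S := S) (by omega)).const_mul (a + 1)).add
    ((tendsto_integral_prod_exp_mul_logDensity (a := a) (b := b) hβ.le ha hb
      (S := insert m S) hcard).const_mul (a + 2 - b)) |>.add
    ((tendsto_finsetSum (Finset.univ.erase m) fun j hj =>
      (tendsto_integral_kernel_mul_logDensity (a := a) (b := b) (l := l) hβ ha hb zero_le_two
        (Finset.ne_of_mem_erase hj).symm
        (f := fun u => (∏ i ∈ S, Real.exp (u i)) *
          if j ∈ S then Real.exp (u m) else 1 + Real.exp (u m) + Real.exp (u j))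
        (by split_ifs <;> fun_prop)
        fun u => abs_prod_exp_mul_ite_le u hm (by omega)).div_const 2).const_mul β)
  have hzero := tendsto_nhds_unique hlim (tendsto_const_nhds.congr' (by
    filter_upwards [Ioc_mem_nhdsGT (zero_lt_one (α := ℝ))] with ε hε
    exact (integral_regularised_loop_equation hβ.le ha hb hm hS hε.1 hε.2).symm))
  have hterm : ∀ j ∈ Finset.univ.erase m, (∫ u : ι → ℝ, ((∏ i ∈ S, Real.exp (u i)) *
      if j ∈ S then Real.exp (u m) else 1 + Real.exp (u m) + Real.exp (u j)) *
        logDensity a b β 0 u) / 2 =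
      (I S + 2 * I (insert m S)) / 2 - if j ∈ S then (I S + I (insert m S)) / 2 else 0 := by
    intro j hj
    split_ifs with hjS
    · have : ∀ u : ι → ℝ, (∏ i ∈ S, Real.exp (u i)) * Real.exp (u m) =
          ∏ i ∈ insert m S, Real.exp (u i) := fun u => by rw [Finset.prod_insert hm, mul_comm]
      simp_rw [this]
      change I (insert m S) / 2 = _
      ring
    · have hjc : (insert j S).card ≤ l := by rwa [Finset.card_insert_of_notMem hjS]
      have hsplit : ∀ u : ι → ℝ, (∏ i ∈ S, Real.exp (u i)) *
          (1 + Real.exp (u m) + Real.exp (u j)) * logDensity a b β 0 u =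
          (∏ i ∈ S, Real.exp (u i)) * logDensity a b β 0 u +
          (∏ i ∈ insert m S, Real.exp (u i)) * logDensity a b β 0 u +
          (∏ i ∈ insert j S, Real.exp (u i)) * logDensity a b β 0 u := fun u => by
        rw [Finset.prod_insert hm, Finset.prod_insert hjS]
        ring
      have hi := fun T (hT : Finset.card T ≤ l) => integrable_prod_exp_mul_logDensity
        (a := a) (b := b) hβ.le ha hb (S := T) hT le_rfl zero_le_one
      simp_rw [hsplit]
      rw [integral_add ((hi S (by omega)).fun_add (hi _ hcard)) (hi _ hjc),
        integral_add (hi S (by omega)) (hi _ hcard), integral_prod_exp_insert_eq hm hjS]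
      change (I S + I (insert m S) + I (insert m S)) / 2 = _
      ring
  rw [Finset.sum_congr rfl hterm, Finset.sum_sub_distrib, Finset.sum_const,
    Finset.sum_ite_mem, Finset.sum_const,
    Finset.inter_eq_right.mpr fun i hi => Finset.mem_erase.mpr
      ⟨by rintro rfl; exact hm hi, Finset.mem_univ i⟩, nsmul_eq_mul, nsmul_eq_mul,
    Finset.card_erase_of_mem (Finset.mem_univ m), Finset.card_univ,
    Nat.cast_pred (Fintype.card_pos_iff.mpr ⟨m⟩)] at hzero
  change (a + 1) * I S + (a + 2 - b) * I (insert m S) + _ = 0 at hzero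
  change _ * I S = _ * I (insert m S)
  linear_combination hzero

theorem integral_prod_exp_mul_logDensity_eq (hβ : 0 < β) (ha : -1 < a)
    (hb : a + ((Fintype.card ι : ℝ) - 1) * β + l + 1 < b) (S : Finset ι) (hS : S.card ≤ l) :
    ∫ u : ι → ℝ, (∏ i ∈ S, Real.exp (u i)) * logDensity a b β 0 u =
      (∏ j ∈ Finset.range S.card, (a + 1 + ((Fintype.card ι : ℝ) - (j + 1)) * β / 2) /
        (b - a - 2 - (2 * (Fintype.card ι : ℝ) - (j + 1) - 1) * β / 2)) *
        ∫ u : ι → ℝ, logDensity a b β 0 u := by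
  induction S using Finset.induction_on with
  | empty => simp
  | insert m S hm ih =>
    rw [Finset.card_insert_of_notMem hm] at hS ⊢
    have hrec := integral_prod_exp_insert_recursion hβ ha hb hm hS
    have hl : ((S.card : ℝ) + 1) ≤ l := by exact_mod_cast hS
    have hden : 0 < b - a - 2 - (2 * (Fintype.card ι : ℝ) - (S.card + 1) - 1) * β / 2 := by
      nlinarith [mul_nonneg (Nat.cast_nonneg (α := ℝ) S.card) hβ.le]
    rw [ih (by omega)] at hrec
    rw [Finset.prod_range_succ, mul_assoc, mul_comm (_ / _), ← mul_div_assoc, ← mul_div_assoc,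
      eq_div_iff hden.ne']
    linear_combination -hrec

theorem integral_logDensity_pos (hβ : 0 < β) (ha : -1 < a)
    (hb : a + ((Fintype.card ι : ℝ) - 1) * β + l + 1 < b) :
    0 < ∫ u : ι → ℝ, logDensity a b β 0 u := by
  have hi : Integrable (logDensity (ι := ι) a b β 0) := by
    simpa using integrable_prod_exp_mul_logDensity (ι := ι) (a := a) (b := b) hβ.le ha hb
      (S := ∅) (by simp) le_rfl zero_le_one
  rw [integral_pos_iff_support_of_nonneg (fun u => logDensity_nonneg a b β le_rfl u) hi]
  refine (continuous_logDensity a b hβ.le 0).isOpen_support.measure_pos _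
    ⟨fun i => (Fintype.equivFin ι i : ℝ), ?_⟩
  refine (mul_pos (Finset.prod_pos fun i _ => by positivity)
    (Finset.prod_pos fun i _ => Finset.prod_pos fun j hj => ?_)).ne'
  refine Real.rpow_pos_of_pos ?_ _
  rw [add_zero]
  refine sq_pos_of_ne_zero (sub_ne_zero.mpr fun h => ?_)
  have h' := Real.exp_injective h
  simp only at h'
  have h'' : (Fintype.equivFin ι i : ℕ) = Fintype.equivFin ι j := by exact_mod_cast h'
  exact Finset.ne_of_mem_erase hj ((Fintype.equivFin ι).injective (Fin.ext h'')).symm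

end Integrals

/-- The Cauchy-type `β`-ensemble average of the `l`-th elementary symmetric polynomial:
`⟨e_l⟩ = C(N,l) ∏_{j=1}^{l} (a + 1 + (N-j)β/2)/(b - a - 2 - (2N-j-1)β/2)`. -/
theorem cauchy_beta_ensemble_average_esym (β : ℝ) (hβ : 0 < β) (N : ℕ) (hN : 0 < N)
    (l : ℕ) (hl : l ≤ N) (a b : ℝ) (ha : -1 < a)
    (hb : a + ((N : ℝ) - 1) * β + l + 1 < b) :
    (∫ x in Set.univ.pi (fun _ : Fin N => Set.Ioi (0 : ℝ)),
        esym N l x * ((∏ i, x i ^ a * (1 + x i) ^ (-b)) * interaction N β x)) /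
      (∫ x in Set.univ.pi (fun _ : Fin N => Set.Ioi (0 : ℝ)),
        (∏ i, x i ^ a * (1 + x i) ^ (-b)) * interaction N β x)
      = (N.choose l : ℝ) *
          ∏ j ∈ Finset.range l,
            (a + 1 + ((N : ℝ) - (j + 1)) * β / 2) /
              (b - a - 2 - (2 * (N : ℝ) - (j + 1) - 1) * β / 2) := by
  have hb' : a + ((Fintype.card (Fin N) : ℝ) - 1) * β + l + 1 < b := by rwa [Fintype.card_fin]
  have hpos := integral_logDensity_pos hβ ha hb'
  simp_rw [setIntegral_pi_Ioi_eq_integral_exp, mul_left_comm _ (esym N l _),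
    prod_exp_mul_cauchyWeight_eq_logDensity, esym, Finset.sum_mul]
  rw [integral_finsetSum _ fun S hS => integrable_prod_exp_mul_logDensity hβ.le ha hb'
      (Finset.mem_powersetCard.mp hS).2.le le_rfl zero_le_one, div_eq_iff hpos.ne',
    Finset.sum_congr rfl fun S hS => integral_prod_exp_mul_logDensity_eq hβ ha hb' S
      (Finset.mem_powersetCard.mp hS).2.le,
    Finset.sum_congr rfl fun S hS => by rw [(Finset.mem_powersetCard.mp hS).2],
    Finset.sum_const, Finset.card_powersetCard, Finset.card_univ, Fintype.card_fin, nsmul_eq_mul,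
    mul_assoc]
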